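/- Let D ⊆ Ψ(2^{<ℕ}) be a computable closed subset of ℝ² which is a dendrite, where 2^{<ℕ} denotes the full binary tree. Then there exists a computable tree of binary strings T⁺ ⊆ 2^{<ℕ} such that D ⊆ Ψ(T⁺) and ([0,1]×{0}) ∩ D = ([0,1]×{0}) ∩ Ψ(T⁺). -/

import Mathlib

open Set Metric

section TopDefs

variable {α : Type*} [TopologicalSpace α]

/-- `A ⊆ α` is an arc with endpoints `x` and `y`:
a homeomorphic (continuous injective) image of `[0,1]` sending `0 ↦ x`, `1 ↦ y`. -/
def IsArc (A : Set α) (x y : α) : Prop :=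
  ∃ f : Set.Icc (0:ℝ) 1 → α, Continuous f ∧ Function.Injective f ∧
    Set.range f = A ∧ f ⟨0, by norm_num⟩ = x ∧ f ⟨1, by norm_num⟩ = y

/-- A continuum: a nonempty compact connected set. -/
def IsContinuum (X : Set α) : Prop := IsCompact X ∧ IsConnected X

/-- Any two distinct points of `X` are endpoints of an arc contained in `X`. -/
def ArcwiseConnectedSet (X : Set α) : Prop :=
  ∀ x ∈ X, ∀ y ∈ X, x ≠ y → ∃ A, A ⊆ X ∧ IsArc A x y

/-- `X` is unicoherent: for all closed connected `A, B ⊆ X` with `A ∪ B = X`,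
the intersection `A ∩ B` is connected. -/
def UnicoherentSet (X : Set α) : Prop :=
  ∀ A B : Set α, A ⊆ X → B ⊆ X → IsClosed A → IsClosed B →
    IsConnected A → IsConnected B → A ∪ B = X → IsConnected (A ∩ B)

/-- Every subcontinuum of `X` is unicoherent. -/
def HereditarilyUnicoherent (X : Set α) : Prop :=
  ∀ Y, Y ⊆ X → IsContinuum Y → UnicoherentSet Y

/-- A dendroid: an arcwise connected, hereditarily unicoherent continuum. -/
def IsDendroid (X : Set α) : Prop :=
  IsContinuum X ∧ ArcwiseConnectedSet X ∧ HereditarilyUnicoherent X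

/-- The unit circle `S¹`. -/
def unitCircle : Set (EuclideanSpace ℝ (Fin 2)) := Metric.sphere 0 1

/-- A dendrite: a locally connected continuum containing no subset homeomorphic to `S¹`. -/
def IsDendrite (X : Set α) : Prop :=
  IsContinuum X ∧ LocallyConnectedSpace ↥X ∧
    ∀ S : Set α, S ⊆ X → IsEmpty (↥S ≃ₜ ↥unitCircle)

/-- `x` and `y` lie in the same arc-component of `Y`. -/
def SameArcComponent (Y : Set α) (x y : α) : Prop :=
  x = y ∨ ∃ A, A ⊆ Y ∧ IsArc A x y

/-- `x` is a ramification point of `X`: `X \ {x}` has at least three arc-components. -/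
def IsRamificationPoint (X : Set α) (x : α) : Prop :=
  x ∈ X ∧ ∃ u v w, u ∈ X \ {x} ∧ v ∈ X \ {x} ∧ w ∈ X \ {x} ∧
    ¬ SameArcComponent (X \ {x}) u v ∧ ¬ SameArcComponent (X \ {x}) u w ∧
    ¬ SameArcComponent (X \ {x}) v w

/-- A tree (as a continuum): a dendrite with finitely many ramification points. -/
def IsTreeContinuum (X : Set α) : Prop :=
  IsDendrite X ∧ {x | IsRamificationPoint X x}.Finite

end TopDefs

section CompDefs

/-- The rational open ball in `ℝ²` coded by `((q₁, q₂), r)`. -/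
def ballOfCode (c : (ℚ × ℚ) × ℚ) : Set (ℝ × ℝ) :=
  {x | dist x (((c.1.1 : ℝ), (c.1.2 : ℝ)) : ℝ × ℝ) < (c.2 : ℝ)}

/-- A closed set `F ⊆ ℝ²` is `Π⁰₁` if it is the complement of the union of the rational
open balls coded by some c.e. set of codes. -/
def IsPi01Closed (F : Set (ℝ × ℝ)) : Prop :=
  ∃ W : (ℚ × ℚ) × ℚ → Prop, REPred W ∧ F = Set.univ \ ⋃ c ∈ {c | W c}, ballOfCode c

/-- `F ⊆ ℝ²` is c.e. closed if the set of codes of rational open balls meeting `F` is c.e. -/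
def IsCEClosed (F : Set (ℝ × ℝ)) : Prop :=
  REPred (fun c : (ℚ × ℚ) × ℚ => (F ∩ ballOfCode c).Nonempty)

/-- A computable closed subset of `ℝ²`: both `Π⁰₁` and c.e. closed. -/
def IsComputableClosed (F : Set (ℝ × ℝ)) : Prop :=
  IsPi01Closed F ∧ IsCEClosed F

/-- A point of `ℝ²` is computable if the set of codes of rational open balls
containing it is c.e. -/
def IsComputablePoint (x : ℝ × ℝ) : Prop :=
  REPred (fun c : (ℚ × ℚ) × ℚ => x ∈ ballOfCode c)

end CompDefs

section PsiDefs

/-- A tree of binary strings: a set of finite binary strings closed under prefixes. -/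
def IsTreeOfStrings (T : Set (List Bool)) : Prop :=
  ∀ σ ∈ T, ∀ τ : List Bool, τ <+: σ → τ ∈ T

/-- The point `ψ(σ) ∈ ℝ²` associated with the binary string `σ`. -/
noncomputable def psiPt (σ : List Bool) : ℝ × ℝ :=
  ((3:ℝ) ^ (-(σ.length : ℤ)) / 2 +
      2 * ∑ i ∈ Finset.range σ.length,
        (if σ.getD i false then (3:ℝ) ^ (-((i : ℤ) + 1)) else 0),
    (2:ℝ) ^ (-(σ.length : ℤ)))

/-- The planar embedding `Ψ(T)` of a tree `T` of binary strings: the closure of the union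
of the segments from `ψ(σ⁻)` to `ψ(σ)` over nonempty `σ ∈ T` (together with the points
`ψ(σ)`, `σ ∈ T`, which makes no difference except for the degenerate trees `∅`, `{⟨⟩}`). -/
noncomputable def PsiSet (T : Set (List Bool)) : Set (ℝ × ℝ) :=
  closure (psiPt '' T ∪ ⋃ σ ∈ T, ⋃ (_ : σ ≠ []), segment ℝ (psiPt σ.dropLast) (psiPt σ))

end PsiDefs

/-!
Let `B₀, B₁, …` be a computable enumeration of rational open balls whose union is the complement
of `D`, and let `B(σ)` be the closed ball around `ψ(σ)` of radius `2^{-|σ|}`. Take for `T⁺` the set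
of strings `σ` such that none of `B₀, …, B_{|σ|-1}` covers `B(σ)`. As `B(σ)` shrinks along strings,
`T⁺` is a tree, and it is computable because covering of one rational ball by another is decided by
comparing rationals.

If `B(σ)` meets `D`, then `σ ∈ T⁺`. A point of `D` lies on a segment of some string, which is
contained in the ball of that string, or in `B(σ)` for strings `σ` of every length; in both cases
it belongs to `Ψ(T⁺)`. Conversely, the segment of `σ` has height at least `2^{-|σ|}`, so a point of
`Ψ(T⁺)` at height `0` is a limit of points on segments of longer and longer strings of `T⁺`. If the
point were in some `Bₙ`, then `Bₙ` would cover `B(σ)` for such a `σ` of length greater than `n`.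
-/

section Computability

open Encodable

variable {α β : Type*} [Primcodable α] [Primcodable β]

theorem computablePred_comp {p : β → Prop} (hp : ComputablePred p) {f : α → β}
    (hf : Computable f) : ComputablePred fun a => p (f a) := by
  classical exact (hp.decide.comp hf).computablePred

theorem computablePred_and {p q : α → Prop} (hp : ComputablePred p) (hq : ComputablePred q) :
    ComputablePred fun a => p a ∧ q a := by
  classical
  exact ((Primrec.and.to_comp.comp hp.decide hq.decide).of_eq fun a => by simp).computablePred

theorem computable_of_graph {f : α → β} (hf : ComputablePred fun x : α × β => f x.1 = x.2) :
    Computable f := by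
  classical
  have hdecode : ComputablePred fun x : α × ℕ => decode x.2 = some (f x.1) := by
    refine ((Computable.option_casesOn (Computable.decode.comp Computable.snd)
      (Computable.const false) (hf.decide.comp <| (Computable.fst.comp Computable.fst).pair
        Computable.snd).to₂).of_eq (g := fun x : α × ℕ => decide (decode x.2 = some (f x.1)))
        fun x => ?_).computablePred
    cases decode (α := β) x.2 <;> simp [eq_comm]
  have hfind := Computable.find (P := fun a n => decode n = some (f a)) hdecode
    fun a => ⟨encode (f a), encodek (f a)⟩
  exact Computable.option_some_iff.1 <| (Computable.decode.comp hfind).of_eq fun a =>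
    Nat.find_spec (p := fun n => decode n = some (f a)) _

theorem computable_count {p : α → ℕ → Prop} [∀ a, DecidablePred (p a)]
    (hp : ComputablePred fun x : α × ℕ => p x.1 x.2) :
    Computable₂ fun a n => Nat.count (p a) n := by
  have hstep : Computable₂ fun (x : α × ℕ) (y : ℕ × ℕ) => y.2 + cond (decide (p x.1 y.1)) 1 0 :=
    Primrec.nat_add.to_comp.comp (Computable.snd.comp Computable.snd) <|
      Computable.cond (hp.decide.comp <| (Computable.fst.comp Computable.fst).pair
        (Computable.fst.comp Computable.snd)) (Computable.const 1) (Computable.const 0)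
  refine (Computable.nat_rec Computable.snd (Computable.const 0) hstep).of_eq fun ⟨a, n⟩ => ?_
  induction n with
  | zero => rfl
  | succ n ih => simp only [Nat.count_succ, ← ih, Bool.cond_decide]

theorem computablePred_forall_lt {p : α → ℕ → Prop} (hp : ComputablePred fun x : α × ℕ => p x.1 x.2)
    {f : α → ℕ} (hf : Computable f) : ComputablePred fun a => ∀ n < f a, p a n := by
  classical
  refine (computablePred_comp (Primrec.eq.comp Primrec.id (Primrec.const 0)).computablePred
    ((computable_count (p := fun a n => ¬ p a n) hp.not).comp Computable.id hf)).of_eq fun a => ?_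
  simp [Nat.count_iff_forall_not]

theorem exists_computable_enumeration {p : α → Prop} (hp : REPred p) :
    ∃ f : ℕ → Option α, Computable f ∧ ∀ a, p a ↔ ∃ n, f n = some a := by
  obtain ⟨code, hcode⟩ := Nat.Partrec.Code.exists_code.1 hp
  have dom_eval_iff (m : ℕ) : (code.eval m).Dom ↔ ∃ a, decode m = some a ∧ p a := by
    rw [congrFun hcode m]
    cases decode (α := α) m <;> simp [Part.assert]
  let f (n : ℕ) : Option α := (code.evaln n.unpair.1 n.unpair.2).bind fun _ => decode n.unpair.2
  have hf : Primrec f :=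
    Primrec.option_bind
      (Nat.Partrec.Code.primrec_evaln.comp <|
        ((Primrec.fst.comp Primrec.unpair).pair (Primrec.const code)).pair
          (Primrec.snd.comp Primrec.unpair))
      (Primrec.decode.comp <| Primrec.snd.comp <| Primrec.unpair.comp Primrec.fst)
  refine ⟨f, hf.to_comp, fun a => ⟨fun ha => ?_, fun ⟨n, hn⟩ => ?_⟩⟩
  · obtain ⟨y, hy⟩ := Part.dom_iff_mem.1 ((dom_eval_iff (encode a)).2 ⟨a, encodek a, ha⟩)
    obtain ⟨k, hk⟩ := Nat.Partrec.Code.evaln_complete.1 hy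
    exact ⟨Nat.pair k (encode a), by simp [f, Option.mem_def.1 hk, encodek]⟩
  · obtain ⟨y, hy, hdecode⟩ := Option.bind_eq_some_iff.1 hn
    obtain ⟨b, hb, hpb⟩ := (dom_eval_iff _).1 (Part.dom_iff_mem.2
      ⟨y, Nat.Partrec.Code.evaln_sound (Option.mem_def.2 hy)⟩)
    exact Option.some.inj (hb.symm.trans hdecode) ▸ hpb

end Computability

section Numbering

open Encodable Denumerable

variable {α : Type*} [Encodable α] [Infinite α]

theorem encode_ofEncodableOfInfinite [DecidablePred (· ∈ Set.range (encode : α → ℕ))] (a : α) :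
    (ofEncodableOfInfinite α).encode a =
      Nat.count (· ∈ Set.range (encode : α → ℕ)) (encode a) := by
  trans @Nat.count (· ∈ Set.range (encode : α → ℕ)) (decidableRangeEncode α) (encode a)
  · rfl
  · congr!

-- `ofEncodableOfInfinite` renumbers `α` by the rank of `encode a` in the range of `encode`; when
-- that range is decidable, the rank can be computed from `encode a` and conversely.
theorem computable_encode_ofEncodableOfInfinite
    (hrange : ComputablePred (· ∈ Set.range (encode : α → ℕ))) :
    @Computable α ℕ (@Primcodable.ofDenumerable α (ofEncodableOfInfinite α)) _ encode := by
  classical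
  have graph_iff (x : α × ℕ) : encode x.1 = x.2 ↔ x.2 ∈ Set.range (encode : α → ℕ) ∧
      Nat.count (· ∈ Set.range (encode : α → ℕ)) x.2 = (ofEncodableOfInfinite α).encode x.1 := by
    rw [encode_ofEncodableOfInfinite]
    exact ⟨fun h => h ▸ ⟨Set.mem_range_self _, rfl⟩, fun ⟨hmem, hcount⟩ =>
      (Nat.count_injective hmem (Set.mem_range_self _) hcount).symm⟩
  let : Primcodable α := @Primcodable.ofDenumerable α (ofEncodableOfInfinite α)
  have hcount : Computable fun x : α × ℕ => Nat.count (· ∈ Set.range (encode : α → ℕ)) x.2 :=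
    (computable_count (p := fun _ : Unit => (· ∈ Set.range (encode : α → ℕ)))
      (computablePred_comp hrange Computable.snd)).comp (Computable.const ()) Computable.snd
  exact computable_of_graph <| (computablePred_and (computablePred_comp hrange Computable.snd)
    (computablePred_comp Primrec.eq.computablePred
      (hcount.pair (Computable.encode.comp Computable.fst)))).of_eq fun x => (graph_iff x).symm

end Numbering

section IntegerArithmetic

open Encodable

theorem encode_int_natCast (n : ℕ) : encode (n : ℤ) = 2 * n := rfl

theorem encode_int_negSucc (n : ℕ) : encode (Int.negSucc n) = 2 * n + 1 := rfl

theorem primrec_int_toNat : Primrec Int.toNat :=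
  (Primrec.ite (Primrec.eq.comp (Primrec.nat_mod.comp Primrec.encode (Primrec.const 2))
    (Primrec.const 0)) (Primrec.nat_div.comp Primrec.encode (Primrec.const 2))
    (Primrec.const 0)).of_eq fun z => by
      cases z with
      | ofNat n => have := encode_int_natCast n; simp_all
      | negSucc n => have := encode_int_negSucc n; simp_all [Nat.add_mod]

theorem primrec_int_toNat_neg : Primrec fun z : ℤ => (-z).toNat :=
  (Primrec.ite (Primrec.eq.comp (Primrec.nat_mod.comp Primrec.encode (Primrec.const 2))
    (Primrec.const 0)) (Primrec.const 0) (Primrec.succ.comp <|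
      Primrec.nat_div.comp Primrec.encode (Primrec.const 2))).of_eq fun z => by
      cases z with
      | ofNat n => have := encode_int_natCast n; simp_all
      | negSucc n => have := encode_int_negSucc n; simp_all [Nat.add_mod, Nat.add_div]

theorem primrec_int_natAbs : Primrec Int.natAbs :=
  (Primrec.nat_add.comp primrec_int_toNat primrec_int_toNat_neg).of_eq fun z => by lia

theorem primrec_int_natCast_sub : Primrec₂ fun m n : ℕ => (m : ℤ) - n := by
  refine Primrec.encode_iff.1 <| (Primrec.ite (Primrec.nat_le.comp Primrec.snd Primrec.fst)
    (Primrec.nat_mul.comp (Primrec.const 2) (Primrec.nat_sub.comp Primrec.fst Primrec.snd))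
    (Primrec.pred.comp <| Primrec.nat_mul.comp (Primrec.const 2) <|
      Primrec.nat_sub.comp Primrec.snd Primrec.fst)).of_eq fun ⟨m, n⟩ => ?_
  dsimp only
  split_ifs with h
  · rw [← Nat.cast_sub h]
    rfl
  · obtain ⟨k, rfl⟩ := Nat.exists_eq_add_of_lt (not_le.1 h)
    have : (m : ℤ) - (m + k + 1 : ℕ) = Int.negSucc k := by lia
    simp only [this, encode_int_negSucc, Nat.pred_eq_sub_one]
    lia

theorem primrec_int_natCast : Primrec ((↑) : ℕ → ℤ) :=
  (primrec_int_natCast_sub.comp Primrec.id (Primrec.const 0)).of_eq fun n => sub_zero (n : ℤ)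

theorem primrec_int_add : Primrec₂ fun z w : ℤ => z + w :=
  (primrec_int_natCast_sub.comp
    (Primrec.nat_add.comp (primrec_int_toNat.comp Primrec.fst) (primrec_int_toNat.comp Primrec.snd))
    (Primrec.nat_add.comp (primrec_int_toNat_neg.comp Primrec.fst)
      (primrec_int_toNat_neg.comp Primrec.snd))).of_eq fun x => by lia

theorem primrec_int_neg : Primrec fun z : ℤ => -z :=
  (primrec_int_natCast_sub.comp primrec_int_toNat_neg primrec_int_toNat).of_eq fun z => by lia

theorem primrec_int_mul_natCast : Primrec₂ fun (z : ℤ) (n : ℕ) => z * n :=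
  (primrec_int_natCast_sub.comp
    (Primrec.nat_mul.comp (primrec_int_toNat.comp Primrec.fst) Primrec.snd)
    (Primrec.nat_mul.comp (primrec_int_toNat_neg.comp Primrec.fst) Primrec.snd)).of_eq fun x => by
      rw [Nat.cast_mul, Nat.cast_mul, ← sub_mul, Int.toNat_sub_toNat_neg]

theorem primrecRel_int_lt : PrimrecRel fun z w : ℤ => z < w :=
  (Primrec.nat_lt.comp
    (Primrec.nat_add.comp (primrec_int_toNat.comp Primrec.fst)
      (primrec_int_toNat_neg.comp Primrec.snd))
    (Primrec.nat_add.comp (primrec_int_toNat.comp Primrec.snd)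
      (primrec_int_toNat_neg.comp Primrec.fst))).of_eq fun x => by lia

end IntegerArithmetic

section RationalArithmetic

theorem computablePred_nat_coprime : ComputablePred fun x : ℕ × ℕ => x.1.Coprime x.2 := by
  have hdvd : PrimrecRel fun m n : ℕ => m ∣ n :=
    (Primrec.eq.comp (Primrec.nat_mod.comp Primrec.snd Primrec.fst) (Primrec.const 0)).of_eq
      fun x => (Nat.dvd_iff_mod_eq_zero ..).symm
  have hcommon : PrimrecPred fun x : (ℕ × ℕ) × ℕ => ¬ (x.2 ∣ x.1.1 ∧ x.2 ∣ x.1.2) ∨ x.2 = 1 :=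
    ((PrimrecPred.and (hdvd.comp Primrec.snd (Primrec.fst.comp Primrec.fst))
      (hdvd.comp Primrec.snd (Primrec.snd.comp Primrec.fst))).not).or
      (Primrec.eq.comp Primrec.snd (Primrec.const 1))
  refine (computablePred_forall_lt (p := fun x k => ¬ (k ∣ x.1 ∧ k ∣ x.2) ∨ k = 1)
    hcommon.computablePred (Primrec.succ.comp Primrec.nat_add).to_comp).of_eq
      fun ⟨m, n⟩ => ⟨fun h => ?_, fun h k _ => ?_⟩
  · have hle : Nat.gcd m n ≤ m + n := by
      rcases Nat.eq_zero_or_pos m with rfl | hm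
      · simp
      · exact (Nat.gcd_le_left n hm).trans (Nat.le_add_right m n)
    exact (h _ (Nat.lt_succ_of_le hle)).resolve_left
      (not_not_intro ⟨Nat.gcd_dvd_left m n, Nat.gcd_dvd_right m n⟩)
  · exact or_iff_not_imp_left.2 fun hk =>
      Nat.eq_one_of_dvd_coprimes h (not_not.1 hk).1 (not_not.1 hk).2

theorem encode_rat_eq (q : ℚ) :
    Rat.instEncodable.encode q = Nat.pair (Equiv.intEquivNat q.num) q.den := rfl

theorem mem_range_encode_rat_iff (m : ℕ) : m ∈ Set.range Rat.instEncodable.encode ↔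
    0 < m.unpair.2 ∧ (Equiv.intEquivNat.symm m.unpair.1).natAbs.Coprime m.unpair.2 := by
  constructor
  · rintro ⟨q, rfl⟩
    simpa [encode_rat_eq, q.den_pos] using q.reduced
  · rintro ⟨hpos, hcoprime⟩
    exact ⟨⟨_, _, hpos.ne', hcoprime⟩, by simp [encode_rat_eq]⟩

theorem primrec_intEquivNat_symm : Primrec Equiv.intEquivNat.symm :=
  Primrec.ofNat ℤ

-- Computability on `ℚ` refers to the `Primcodable` instance, whose numbering is the renumbering
-- `ofEncodableOfInfinite` of the explicit coding `Rat.instEncodable`.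
theorem computable_encode_rat : Computable Rat.instEncodable.encode := by
  refine computable_encode_ofEncodableOfInfinite ?_
  have hnum := primrec_intEquivNat_symm.comp (Primrec.fst.comp Primrec.unpair)
  have hden := Primrec.snd.comp Primrec.unpair
  have hpos := (Primrec.nat_lt.comp (Primrec.const 0) hden).computablePred
  have hcoprime := computablePred_comp computablePred_nat_coprime
    ((primrec_int_natAbs.comp hnum).pair hden).to_comp
  exact (computablePred_and hpos hcoprime).of_eq fun m => (mem_range_encode_rat_iff m).symm

theorem computable_rat_num : Computable Rat.num :=
  ((primrec_intEquivNat_symm.comp (Primrec.fst.comp Primrec.unpair)).to_comp.comp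
    computable_encode_rat).of_eq fun q => by simp [encode_rat_eq]

theorem computable_rat_den : Computable Rat.den :=
  ((Primrec.snd.comp Primrec.unpair).to_comp.comp computable_encode_rat).of_eq
    fun q => by simp [encode_rat_eq]

theorem rat_intCast_div_eq_iff (z : ℤ) {n : ℕ} (hn : n ≠ 0) (q : ℚ) :
    (z : ℚ) / n = q ↔ z * q.den = q.num * n := by
  conv_lhs => rw [← Rat.num_div_den q]
  rw [div_eq_div_iff (by exact_mod_cast hn) (by exact_mod_cast q.den_ne_zero)]
  exact_mod_cast Iff.rfl

theorem computable_rat_intCast_div : Computable₂ fun (z : ℤ) (n : ℕ) => (z : ℚ) / n := by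
  have hgraph : ComputablePred fun x : (ℤ × ℕ) × ℚ =>
      x.1.1 * x.2.den = x.2.num * (x.1.2 + 1 : ℕ) :=
    computablePred_comp Primrec.eq.computablePred <| Computable.pair
      (primrec_int_mul_natCast.to_comp.comp (Computable.fst.comp Computable.fst)
        (computable_rat_den.comp Computable.snd))
      (primrec_int_mul_natCast.to_comp.comp (computable_rat_num.comp Computable.snd)
        (Computable.succ.comp (Computable.snd.comp Computable.fst)))
  have hsucc : Computable fun x : ℤ × ℕ => (x.1 : ℚ) / (x.2 + 1 : ℕ) :=
    computable_of_graph <| hgraph.of_eq fun x =>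
      (rat_intCast_div_eq_iff x.1.1 x.1.2.succ_ne_zero x.2).symm
  refine (Computable.nat_casesOn Computable.snd (Computable.const 0) (hsucc.comp
    ((Computable.fst.comp Computable.fst).pair Computable.snd)).to₂).of_eq fun ⟨z, n⟩ => ?_
  cases n <;> simp

theorem computable_rat_num_mul_den : Computable₂ fun q r : ℚ => q.num * (r.den : ℤ) :=
  primrec_int_mul_natCast.to_comp.comp (computable_rat_num.comp Computable.fst)
    (computable_rat_den.comp Computable.snd)

theorem computable_rat_add : Computable₂ fun q r : ℚ => q + r :=
  (computable_rat_intCast_div.comp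
    (primrec_int_add.to_comp.comp computable_rat_num_mul_den
      (computable_rat_num_mul_den.comp Computable.snd Computable.fst))
    (Primrec.nat_mul.to_comp.comp (computable_rat_den.comp Computable.fst)
      (computable_rat_den.comp Computable.snd))).of_eq fun x => by
        rw [← Rat.mkRat_eq_div, ← Rat.add_def']

theorem computable_rat_neg : Computable fun q : ℚ => -q :=
  (computable_rat_intCast_div.comp (primrec_int_neg.to_comp.comp computable_rat_num)
    computable_rat_den).of_eq fun q => by
      rw [Int.cast_neg, neg_div, Rat.num_div_den]

theorem computable_rat_sub : Computable₂ fun q r : ℚ => q - r :=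
  (computable_rat_add.comp Computable.fst (computable_rat_neg.comp Computable.snd)).of_eq
    fun x => (sub_eq_add_neg x.1 x.2).symm

theorem computablePred_rat_lt : ComputablePred fun x : ℚ × ℚ => x.1 < x.2 :=
  (computablePred_comp primrecRel_int_lt.computablePred <| computable_rat_num_mul_den.pair
    (computable_rat_num_mul_den.comp Computable.snd Computable.fst)).of_eq
      fun x => (Rat.lt_iff x.1 x.2).symm

end RationalArithmetic

section PsiGeometry

theorem psiPt_nil : psiPt [] = (1 / 2, 1) := by
  simp [psiPt]

theorem psiPt_concat (σ : List Bool) (b : Bool) :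
    psiPt (σ ++ [b]) =
      psiPt σ + (cond b 1 (-1) * (1 / 3) ^ (σ.length + 1), -(1 / 2) ^ (σ.length + 1)) := by
  have hsum : ∑ i ∈ Finset.range σ.length,
      (if (σ ++ [b]).getD i false then (3 : ℝ) ^ (-((i : ℤ) + 1)) else 0) =
      ∑ i ∈ Finset.range σ.length, if σ.getD i false then (3 : ℝ) ^ (-((i : ℤ) + 1)) else 0 :=
    Finset.sum_congr rfl fun i hi => by rw [List.getD_append _ _ _ _ (Finset.mem_range.1 hi)]
  have hlast : (σ ++ [b]).getD σ.length false = b := by simp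
  have hpow (x : ℝ) : x ^ (-((σ.length : ℤ) + 1)) = (1 / x) ^ (σ.length + 1) := by
    rw [← Nat.cast_succ, zpow_neg, zpow_natCast, one_div, inv_pow]
  have hpow' (x : ℝ) : x ^ (-(σ.length : ℤ)) = (1 / x) ^ σ.length := by
    rw [zpow_neg, zpow_natCast, one_div, inv_pow]
  rw [psiPt, psiPt, List.length_append, List.length_singleton, Finset.sum_range_succ, hsum, hlast]
  simp only [Nat.cast_succ, hpow, hpow', Prod.mk_add_mk, Prod.mk.injEq, pow_succ]
  cases b <;> simp only [Bool.false_eq_true, if_true, if_false, cond_true, cond_false] <;>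
    constructor <;> ring

theorem psiPt_snd (σ : List Bool) : (psiPt σ).2 = (1 / 2) ^ σ.length := by
  simp [psiPt]

theorem dist_psiPt_concat_le (σ : List Bool) (b : Bool) :
    dist (psiPt σ) (psiPt (σ ++ [b])) ≤ (1 / 2) ^ (σ.length + 1) := by
  have hsign : ‖(cond b 1 (-1) : ℝ)‖ = 1 := by cases b <;> simp
  rw [psiPt_concat, dist_self_add_right, Prod.norm_def, norm_mul, norm_neg, norm_pow, norm_pow,
    hsign, one_mul, Real.norm_of_nonneg (by norm_num : (0 : ℝ) ≤ 1 / 2),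
    Real.norm_of_nonneg (by norm_num : (0 : ℝ) ≤ 1 / 3)]
  exact max_le (pow_le_pow_left₀ (by norm_num) (by norm_num) _) le_rfl

/-- The sup-metric ball around `ψ(σ)` of radius `2^{-|σ|}`. The radius is chosen so that these
balls are nested along strings and the ball of `σ` contains every segment of `Ψ(2^{<ℕ})` that
belongs to an extension of `σ`. -/
def psiBall (σ : List Bool) : Set (ℝ × ℝ) := closedBall (psiPt σ) ((1 / 2) ^ σ.length)

theorem psiBall_anti {τ σ : List Bool} (h : τ <+: σ) : psiBall σ ⊆ psiBall τ := by
  obtain ⟨ρ, rfl⟩ := h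
  induction ρ using List.reverseRecOn with
  | nil => rw [List.append_nil]
  | append_singleton ρ b ih =>
    refine Subset.trans ?_ ih
    rw [← List.append_assoc]
    refine closedBall_subset_closedBall' ?_
    rw [List.length_append (bs := [b]), List.length_singleton, dist_comm]
    calc (1 / 2 : ℝ) ^ ((τ ++ ρ).length + 1) + dist (psiPt (τ ++ ρ)) (psiPt (τ ++ ρ ++ [b]))
        ≤ (1 / 2) ^ ((τ ++ ρ).length + 1) + (1 / 2) ^ ((τ ++ ρ).length + 1) := by
          gcongr
          exact dist_psiPt_concat_le (τ ++ ρ) b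
      _ = (1 / 2) ^ (τ ++ ρ).length := by ring

theorem psiPt_mem_psiBall (σ : List Bool) : psiPt σ ∈ psiBall σ :=
  mem_closedBall_self (by positivity)

/-- The segment of `Ψ(T)` that belongs to the string `σ`; for `σ = []` it is the point `ψ([])`. -/
def psiSegment (σ : List Bool) : Set (ℝ × ℝ) := segment ℝ (psiPt σ.dropLast) (psiPt σ)

theorem psiPt_mem_psiSegment (σ : List Bool) : psiPt σ ∈ psiSegment σ :=
  right_mem_segment ..

theorem psiSet_eq_closure_biUnion_psiSegment (T : Set (List Bool)) :
    PsiSet T = closure (⋃ σ ∈ T, psiSegment σ) := by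
  refine congrArg closure (Subset.antisymm (union_subset ?_ ?_) ?_)
  · rintro _ ⟨σ, hσ, rfl⟩
    exact mem_biUnion hσ (psiPt_mem_psiSegment σ)
  · exact iUnion₂_mono fun σ _ => iUnion_subset fun _ => Subset.rfl
  · refine iUnion₂_subset fun σ hσ x hx => ?_
    rcases eq_or_ne σ [] with rfl | hne
    · rw [psiSegment, List.dropLast_nil, segment_same] at hx
      exact Or.inl ⟨[], hσ, hx.symm⟩
    · exact Or.inr (mem_biUnion hσ (mem_iUnion.2 ⟨hne, hx⟩))

theorem isClosed_psiSegment (σ : List Bool) : IsClosed (psiSegment σ) := by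
  rw [psiSegment, segment_eq_image_lineMap]
  exact (isCompact_Icc.image (by fun_prop)).isClosed

theorem psiSegment_subset_psiBall (σ : List Bool) : psiSegment σ ⊆ psiBall σ := by
  refine (convex_closedBall _ _).segment_subset ?_ (psiPt_mem_psiBall σ)
  rcases List.eq_nil_or_concat' σ with rfl | ⟨τ, b, rfl⟩
  · exact psiPt_mem_psiBall []
  · simpa using dist_psiPt_concat_le τ b

theorem pow_length_le_snd_of_mem_psiSegment {σ : List Bool} {x : ℝ × ℝ} (hx : x ∈ psiSegment σ) :
    (1 / 2) ^ σ.length ≤ x.2 := by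
  have hconvex : Convex ℝ {x : ℝ × ℝ | (1 / 2) ^ σ.length ≤ x.2} :=
    convex_halfSpace_ge (LinearMap.snd ℝ ℝ ℝ).isLinear _
  refine hconvex.segment_subset ?_ ?_ hx
  · rw [mem_ofPred_eq, psiPt_snd, List.length_dropLast]
    exact pow_le_pow_of_le_one (by norm_num) (by norm_num) (Nat.sub_le _ _)
  · exact (psiPt_snd σ).ge

theorem psiSet_univ_subset (n : ℕ) :
    PsiSet univ ⊆
      (⋃ σ ∈ {σ | σ.length ≤ n}, psiSegment σ) ∪ ⋃ τ ∈ {τ | τ.length = n}, psiBall τ := by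
  rw [psiSet_eq_closure_biUnion_psiSegment]
  refine closure_minimal (iUnion₂_subset fun σ _ => ?_) (IsClosed.union ?_ ?_)
  · rcases le_or_gt σ.length n with hle | hlt
    · exact subset_union_of_subset_left (subset_biUnion_of_mem (u := psiSegment) hle) _
    · have htake : (σ.take n).length = n := List.length_take_of_le hlt.le
      exact subset_union_of_subset_right ((psiSegment_subset_psiBall σ).trans <|
        (psiBall_anti (List.take_prefix n σ)).trans <|
          subset_biUnion_of_mem (u := psiBall) htake) _
  · exact (List.finite_length_le Bool n).isClosed_biUnion fun σ _ => isClosed_psiSegment σ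
  · exact (List.finite_length_eq Bool n).isClosed_biUnion fun τ _ => isClosed_closedBall

theorem mem_psiSet_of_forall_mem_psiBall {T : Set (List Bool)} {x : ℝ × ℝ} (hx : x ∈ PsiSet univ)
    (hT : ∀ σ, x ∈ psiBall σ → σ ∈ T) : x ∈ PsiSet T := by
  rw [psiSet_eq_closure_biUnion_psiSegment, Metric.mem_closure_iff]
  intro ε hε
  obtain ⟨n, hn⟩ := exists_pow_lt_of_lt_one hε (by norm_num : (1 / 2 : ℝ) < 1)
  rcases psiSet_univ_subset n hx with hseg | hball
  · obtain ⟨σ, -, hσ⟩ := mem_iUnion₂.1 hseg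
    exact ⟨x, mem_biUnion (hT σ (psiSegment_subset_psiBall σ hσ)) hσ, by rwa [dist_self]⟩
  · obtain ⟨τ, rfl, hτ⟩ := mem_iUnion₂.1 hball
    exact ⟨psiPt τ, mem_biUnion (hT τ hτ) (psiPt_mem_psiSegment τ), lt_of_le_of_lt hτ hn⟩

theorem exists_psiBall_subset_of_mem_psiSet {T : Set (List Bool)} {x : ℝ × ℝ} (hx : x ∈ PsiSet T)
    (hheight : x.2 = 0) {U : Set (ℝ × ℝ)} (hU : U ∈ nhds x) (n : ℕ) :
    ∃ σ ∈ T, n < σ.length ∧ psiBall σ ⊆ U := by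
  obtain ⟨ε, hε, hεU⟩ := Metric.nhds_basis_closedBall.mem_iff.1 hU
  rw [psiSet_eq_closure_biUnion_psiSegment, Metric.mem_closure_iff] at hx
  obtain ⟨y, hy, hxy⟩ := hx (min (ε / 3) ((1 / 2) ^ n)) (by positivity)
  obtain ⟨hyε, hyn⟩ := lt_min_iff.1 hxy
  obtain ⟨σ, hσT, hyσ⟩ := mem_iUnion₂.1 hy
  have hradius : (1 / 2) ^ σ.length ≤ dist x y :=
    calc (1 / 2) ^ σ.length ≤ y.2 := pow_length_le_snd_of_mem_psiSegment hyσ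
      _ ≤ dist x.2 y.2 := by rw [hheight, dist_zero_left]; exact le_abs_self _
      _ ≤ dist x y := le_max_right _ _
  refine ⟨σ, hσT, (pow_lt_pow_iff_right_of_lt_one₀ (by norm_num) (by norm_num)).1
    (hradius.trans_lt hyn), (closedBall_subset_closedBall' ?_).trans hεU⟩
  have hcenter : dist y (psiPt σ) ≤ (1 / 2) ^ σ.length := psiSegment_subset_psiBall σ hyσ
  linarith [dist_triangle_right (psiPt σ) x y, dist_comm y (psiPt σ)]

end PsiGeometry

section AvoidingTree

/-- The tree of strings `σ` for which none of the first `|σ|` sets of the sequence `U` covers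
`psiBall σ`. Bounding the index by `|σ|` makes membership decidable when covering is. -/
def avoidingTree (U : ℕ → Set (ℝ × ℝ)) : Set (List Bool) :=
  {σ | ∀ n < σ.length, ¬ psiBall σ ⊆ U n}

variable {U : ℕ → Set (ℝ × ℝ)}

theorem isTreeOfStrings_avoidingTree : IsTreeOfStrings (avoidingTree U) :=
  fun _ hσ _ hτ n hn hcover => hσ n (hn.trans_le hτ.length_le) ((psiBall_anti hτ).trans hcover)

theorem mem_psiSet_avoidingTree {x : ℝ × ℝ} (hx : x ∈ PsiSet univ) (hxU : x ∉ ⋃ n, U n) :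
    x ∈ PsiSet (avoidingTree U) :=
  mem_psiSet_of_forall_mem_psiBall hx fun _ hσ n _ hcover => hxU (mem_iUnion.2 ⟨n, hcover hσ⟩)

theorem notMem_iUnion_of_mem_psiSet_avoidingTree (hU : ∀ n, IsOpen (U n)) {x : ℝ × ℝ}
    (hx : x ∈ PsiSet (avoidingTree U)) (hheight : x.2 = 0) : x ∉ ⋃ n, U n := by
  intro hmem
  obtain ⟨n, hn⟩ := mem_iUnion.1 hmem
  obtain ⟨σ, hσ, hlt, hcover⟩ :=
    exists_psiBall_subset_of_mem_psiSet hx hheight ((hU n).mem_nhds hn) n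
  exact hσ n hlt hcover

end AvoidingTree

section Effectivity

theorem IsPi01Closed.exists_computable_seq {F : Set (ℝ × ℝ)} (hF : IsPi01Closed F) :
    ∃ f : ℕ → (ℚ × ℚ) × ℚ, Computable f ∧ F = (⋃ n, ballOfCode (f n))ᶜ := by
  obtain ⟨W, hW, rfl⟩ := hF
  obtain ⟨e, he, hWe⟩ := exists_computable_enumeration hW
  -- A code of the empty ball fills the gaps of the enumeration.
  have hempty : ballOfCode ((0, 0), 0) = ∅ :=
    ball_eq_empty.2 (by simp)
  refine ⟨fun n => (e n).getD ((0, 0), 0), Computable.option_getD he (Computable.const _), ?_⟩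
  rw [← compl_eq_univ_sdiff]
  refine congrArg compl (Subset.antisymm ?_ (iUnion_subset fun n => ?_))
  · refine iUnion₂_subset fun c hc => ?_
    obtain ⟨n, hn⟩ := (hWe c).1 hc
    exact subset_iUnion_of_subset n (by simp only [hn, Option.getD_some, Subset.rfl])
  · rcases hn : e n with _ | c
    · simp only [hn, Option.getD_none, hempty, empty_subset]
    · simp only [hn, Option.getD_some]
      exact subset_biUnion_of_mem (u := ballOfCode) (show c ∈ {c | W c} from (hWe c).2 ⟨n, hn⟩)

theorem closedBall_subset_ball_prod_iff {x y : ℝ × ℝ} {ε r : ℝ} (hε : 0 ≤ ε) :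
    closedBall x ε ⊆ ball y r ↔
      (y.1 - r < x.1 - ε ∧ x.1 + ε < y.1 + r) ∧ y.2 - r < x.2 - ε ∧ x.2 + ε < y.2 + r := by
  have hle (a : ℝ) : a - ε ≤ a + ε := by linarith
  have hne (a : ℝ) : (Icc (a - ε) (a + ε)).Nonempty := nonempty_Icc.2 (hle a)
  rw [← Prod.mk.eta (p := x), ← Prod.mk.eta (p := y), ← closedBall_prod_same, ← ball_prod_same]
  simp only [Real.closedBall_eq_Icc, Real.ball_eq_Ioo]
  rw [prod_subset_prod_iff' ((hne _).prod (hne _)), Icc_subset_Ioo_iff (hle _),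
    Icc_subset_Ioo_iff (hle _)]

/-- The integer `N` with ternary digits `2 * σ(i)`, most significant digit first, so that `ψ(σ)` lies
above the middle of the Cantor interval `[N / 3^{|σ|}, (N + 1) / 3^{|σ|}]`. -/
def ternaryNumerator (σ : List Bool) : ℕ := σ.foldl (fun a b => 3 * a + cond b 2 0) 0

theorem ternaryNumerator_concat (σ : List Bool) (b : Bool) :
    ternaryNumerator (σ ++ [b]) = 3 * ternaryNumerator σ + cond b 2 0 := by
  rw [ternaryNumerator, List.foldl_concat, ternaryNumerator]

theorem primrec_ternaryNumerator : Primrec ternaryNumerator :=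
  Primrec.list_foldl (h := fun _ x => 3 * x.1 + cond x.2 2 0) Primrec.id (Primrec.const 0) <|
    Primrec.nat_add.comp (Primrec.nat_mul.comp (Primrec.const 3) (Primrec.fst.comp Primrec.snd))
      (Primrec.cond (Primrec.snd.comp Primrec.snd) (Primrec.const 2) (Primrec.const 0))

theorem primrec_const_pow (k : ℕ) : Primrec fun n : ℕ => k ^ n :=
  (Primrec.nat_rec₁ 1 (Primrec.nat_mul.comp Primrec.snd (Primrec.const k)).to₂).of_eq fun n => by
    induction n with
    | zero => rfl
    | succ n ih => rw [pow_succ, ← ih]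

/-- The first coordinate of `ψ(σ)` as a rational number, on which one can compute. -/
def psiAbscissa (σ : List Bool) : ℚ :=
  ((2 * ternaryNumerator σ + 1 : ℕ) : ℤ) / (2 * 3 ^ σ.length : ℕ)

theorem psiPt_eq (σ : List Bool) : psiPt σ = (↑(psiAbscissa σ), ↑((1 / 2 : ℚ) ^ σ.length)) := by
  refine Prod.ext ?_ (by simp [psiPt_snd])
  induction σ using List.reverseRecOn with
  | nil => simp [psiPt_nil, psiAbscissa, ternaryNumerator]
  | append_singleton σ b ih =>
    rw [psiPt_concat, Prod.fst_add, ih]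
    simp only [psiAbscissa, ternaryNumerator_concat, List.length_append, List.length_singleton]
    cases b <;> simp only [cond_true, cond_false, one_div, inv_pow] <;> push_cast <;> field_simp <;>
      ring

theorem computable_psiAbscissa : Computable psiAbscissa :=
  computable_rat_intCast_div.comp
    (primrec_int_natCast.comp <| Primrec.succ.comp <|
      Primrec.nat_mul.comp (Primrec.const 2) primrec_ternaryNumerator).to_comp
    (Primrec.nat_mul.comp (Primrec.const 2) <|
      (primrec_const_pow 3).comp Primrec.list_length).to_comp

theorem computable_rat_one_half_pow : Computable fun n : ℕ => (1 / 2 : ℚ) ^ n :=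
  (computable_rat_intCast_div.comp (Computable.const 1) (primrec_const_pow 2).to_comp).of_eq
    fun n => by simp

theorem psiBall_subset_ballOfCode_iff (σ : List Bool) (c : (ℚ × ℚ) × ℚ) :
    psiBall σ ⊆ ballOfCode c ↔
      (c.1.1 - c.2 < psiAbscissa σ - (1 / 2) ^ σ.length ∧
        psiAbscissa σ + (1 / 2) ^ σ.length < c.1.1 + c.2) ∧
      c.1.2 - c.2 < (1 / 2) ^ σ.length - (1 / 2) ^ σ.length ∧
        (1 / 2) ^ σ.length + (1 / 2) ^ σ.length < c.1.2 + c.2 := by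
  have hradius : (1 / 2 : ℝ) ^ σ.length = ↑((1 / 2 : ℚ) ^ σ.length) := by push_cast; rfl
  rw [psiBall, psiPt_eq, hradius]
  refine (closedBall_subset_ball_prod_iff (by positivity)).trans ?_
  simp only [← Rat.cast_sub, ← Rat.cast_add, Rat.cast_lt]

theorem computablePred_psiBall_subset_ballOfCode :
    ComputablePred fun x : List Bool × (ℚ × ℚ) × ℚ => psiBall x.1 ⊆ ballOfCode x.2 := by
  have hlength := Computable.list_length.comp
    (Computable.fst (α := List Bool) (β := (ℚ × ℚ) × ℚ))
  have hε := computable_rat_one_half_pow.comp hlength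
  have hr := Computable.snd.comp (Computable.snd (α := List Bool) (β := (ℚ × ℚ) × ℚ))
  have hcenter := Computable.fst.comp (Computable.snd (α := List Bool) (β := (ℚ × ℚ) × ℚ))
  have hinterval {a b : List Bool × (ℚ × ℚ) × ℚ → ℚ} (ha : Computable a) (hb : Computable b) :
      ComputablePred fun x => b x - x.2.2 < a x - (1 / 2) ^ x.1.length ∧
        a x + (1 / 2) ^ x.1.length < b x + x.2.2 :=
    computablePred_and
      (computablePred_comp computablePred_rat_lt
        ((computable_rat_sub.comp hb hr).pair (computable_rat_sub.comp ha hε)))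
      (computablePred_comp computablePred_rat_lt
        ((computable_rat_add.comp ha hε).pair (computable_rat_add.comp hb hr)))
  exact (computablePred_and
    (hinterval (computable_psiAbscissa.comp Computable.fst) (Computable.fst.comp hcenter))
    (hinterval hε (Computable.snd.comp hcenter))).of_eq
      fun x => (psiBall_subset_ballOfCode_iff x.1 x.2).symm

theorem computablePred_mem_avoidingTree {f : ℕ → (ℚ × ℚ) × ℚ} (hf : Computable f) :
    ComputablePred fun σ => σ ∈ avoidingTree fun n => ballOfCode (f n) :=
  computablePred_forall_lt (p := fun σ n => ¬ psiBall σ ⊆ ballOfCode (f n))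
    (computablePred_comp computablePred_psiBall_subset_ballOfCode
      (Computable.fst.pair (hf.comp Computable.snd))).not
    Computable.list_length

end Effectivity

theorem computable_dendrite_in_full_psiSet_extends_to_computable_tree_general
    {D : Set (ℝ × ℝ)} (hsub : D ⊆ PsiSet (Set.univ : Set (List Bool))) (hpi : IsPi01Closed D) :
    ∃ T : Set (List Bool), ComputablePred (fun σ : List Bool => σ ∈ T) ∧
      IsTreeOfStrings T ∧ D ⊆ PsiSet T ∧
      (Set.Icc (0:ℝ) 1 ×ˢ ({0} : Set ℝ)) ∩ D =
        (Set.Icc (0:ℝ) 1 ×ˢ ({0} : Set ℝ)) ∩ PsiSet T := by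
  obtain ⟨f, hf, rfl⟩ := hpi.exists_computable_seq
  have hD : (⋃ n, ballOfCode (f n))ᶜ ⊆ PsiSet (avoidingTree fun n => ballOfCode (f n)) :=
    fun x hx => mem_psiSet_avoidingTree (hsub hx) hx
  refine ⟨avoidingTree fun n => ballOfCode (f n), computablePred_mem_avoidingTree hf,
    isTreeOfStrings_avoidingTree, hD, ?_⟩
  refine Subset.antisymm (inter_subset_inter_right _ hD) fun x ⟨hx, hxT⟩ => ⟨hx, ?_⟩
  exact notMem_iUnion_of_mem_psiSet_avoidingTree (fun _ => isOpen_ball) hxT hx.2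

theorem computable_dendrite_in_full_psiSet_extends_to_computable_tree
    (D : Set (ℝ × ℝ)) (hsub : D ⊆ PsiSet (Set.univ : Set (List Bool)))
    (hcomp : IsComputableClosed D) (hden : IsDendrite D) :
    ∃ T : Set (List Bool), ComputablePred (fun σ : List Bool => σ ∈ T) ∧
      IsTreeOfStrings T ∧ D ⊆ PsiSet T ∧
      (Set.Icc (0:ℝ) 1 ×ˢ ({0} : Set ℝ)) ∩ D =
        (Set.Icc (0:ℝ) 1 ×ˢ ({0} : Set ℝ)) ∩ PsiSet T :=
  computable_dendrite_in_full_psiSet_extends_to_computable_tree_general hsub hcomp.1
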